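/- arXiv:1406.3974 — 2 statements merged into one kernel-verified Lean document; each statement's English description precedes it below -/
import Mathlib

section
/- Let u be an infinite word, let v = u[i+1..i+n] be an occurrence of a factor v of length n in u, and let m be a factor of v that occurs in u[i+1..i+n]. If every occurrence of m inside u[i+1..i+n] is internal, then v is p(m)-periodic, i.e., v_h = v_{h+p(m)} for all 1 ≤ h ≤ n − p(m). -/
/-!
Let `p = p(m)`. An occurrence of `m` at `j` is internal precisely when `u` is `p`-periodic on the
occurrence enlarged by `p` letters on both sides (cut off at the beginning of `u`), and then `m`
also occurs at `j + p` and, if `p ≤ j`, at `j - p`, because `u` takes the same letters there. Hence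
the least occurrence of `m` inside the window `[i, i + n)` lies before `i + p`, since otherwise
`j - p` would be a smaller one. Given `x` with `i ≤ x` and `x + p < i + n`, there is therefore an
occurrence `j ≤ x + p`; for the greatest such `j`, the enlarged occurrence contains both `x` and
`x + p`, since otherwise `j + p ≤ x + p` would be a greater one.
-/

/-- The factor of the infinite word `u` of length `n` starting at position `i`. -/
def wordSeg {α : Type*} (u : ℕ → α) (i n : ℕ) : List α :=
  (List.range n).map (fun t => u (i + t))

/-- The set of (finite) factors of the infinite word `u`. -/
def Factors {α : Type*} (u : ℕ → α) : Set (List α) :=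
  {w | ∃ i, w = wordSeg u i w.length}

/-- Subword complexity: the number of distinct factors of `u` of length `n`. -/
noncomputable def complexity {α : Type*} (u : ℕ → α) (n : ℕ) : ℕ :=
  {w : List α | w.length = n ∧ w ∈ Factors u}.ncard

/-- `p_L(n)`: the number of words of length `n` in the language `L`. -/
noncomputable def langComplexity {α : Type*} (L : Set (List α)) (n : ℕ) : ℕ :=
  {w ∈ L | w.length = n}.ncard

/-- The minimal period `p(w)` of a finite word `w`: the least `p > 0` such that
`w_i = w_{i+p}` whenever both indices are within `w` (here 0-based). -/
noncomputable def minPeriod {α : Type*} (w : List α) : ℕ :=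
  sInf {p | 0 < p ∧ ∀ i, i + p < w.length → w[i]? = w[i + p]?}

/-- The occurrence of `m` at (0-based) position `j` of `u` is internal: around the
occurrence, `u` continues `p(m)`-periodically on both sides (within the word `u`). -/
def InternalOcc {α : Type*} (u : ℕ → α) (m : List α) (j : ℕ) : Prop :=
  wordSeg u j m.length = m ∧
  (∀ t, t < minPeriod m → minPeriod m ≤ j + t → u (j + t) = u (j + t - minPeriod m)) ∧
  (∀ t, m.length - minPeriod m ≤ t → t < m.length → u (j + t) = u (j + t + minPeriod m))

section PeriodicityOfWindow

open Set

variable {α : Type*} {u : ℕ → α} {m : List α} {i j n p x : ℕ}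

/-- `p`-periodicity of the infinite word `u` on a set `s` of positions: the letters at any two
positions of `s` at distance `p` agree. On an interval this says that the corresponding factor of
`u` has period `p`. The degenerate case `p = 0` is allowed and always holds. -/
def PeriodicOn (u : ℕ → α) (p : ℕ) (s : Set ℕ) : Prop :=
  ∀ x ∈ s, x + p ∈ s → u x = u (x + p)

/-- The set of occurrences of the finite word `m` inside the window `[i, i + n)` of `u`, each
recorded by its 0-based starting position in `u` rather than in the window. -/
def occurrencesIn (u : ℕ → α) (m : List α) (i n : ℕ) : Set ℕ :=
  {j | i ≤ j ∧ j + m.length ≤ i + n ∧ wordSeg u j m.length = m}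

theorem length_wordSeg : (wordSeg u j n).length = n := by
  simp [wordSeg]

theorem getElem?_wordSeg (hx : x < n) : (wordSeg u j n)[x]? = some (u (j + x)) := by
  simp [wordSeg, hx]

theorem hasPeriod_wordSeg_iff :
    (wordSeg u j n).HasPeriod p ↔ PeriodicOn u p (Ico j (j + n)) := by
  rw [List.hasPeriod_iff_getElem?, length_wordSeg]
  constructor
  · rintro h x ⟨hjx, -⟩ ⟨-, hxp⟩
    obtain ⟨t, rfl⟩ := Nat.exists_eq_add_of_le hjx
    have ht := h t (by lia)
    rwa [getElem?_wordSeg (by lia), getElem?_wordSeg (by lia), Option.some_inj,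
      ← Nat.add_assoc] at ht
  · intro h t ht
    rw [getElem?_wordSeg (by lia), getElem?_wordSeg (by lia), ← Nat.add_assoc,
      h (j + t) ⟨by lia, by lia⟩ ⟨by lia, by lia⟩]

theorem PeriodicOn.mono {s t : Set ℕ} (h : PeriodicOn u p t) (hst : s ⊆ t) : PeriodicOn u p s :=
  fun x hx hxp => h x (hst hx) (hst hxp)

theorem PeriodicOn.wordSeg_add_eq (h : PeriodicOn u p (Ico j (j + n + p))) :
    wordSeg u (j + p) n = wordSeg u j n := by
  refine List.map_congr_left fun t ht => ?_
  have htn : t < n := List.mem_range.1 ht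
  rw [h (j + t) ⟨by lia, by lia⟩ ⟨by lia, by lia⟩, Nat.add_right_comm]

theorem hasPeriod_minPeriod (m : List α) : m.HasPeriod (minPeriod m) := by
  have hmem : minPeriod m ∈ {p | 0 < p ∧ ∀ t, t + p < m.length → m[t]? = m[t + p]?} :=
    Nat.sInf_mem ⟨m.length + 1, by lia, fun t ht => by lia⟩
  exact List.hasPeriod_iff_getElem?.2 fun t ht => hmem.2 t (by lia)

theorem InternalOcc.periodicOn (h : InternalOcc u m j) :
    PeriodicOn u (minPeriod m) (Ico (j - minPeriod m) (j + m.length + minPeriod m)) := by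
  obtain ⟨hocc, hleft, hright⟩ := h
  have hmid : PeriodicOn u (minPeriod m) (Ico j (j + m.length)) :=
    hasPeriod_wordSeg_iff.1 (hocc.symm ▸ hasPeriod_minPeriod m)
  rintro x ⟨hjx, -⟩ ⟨-, hxj⟩
  rcases lt_or_ge x j with hlt | hge
  · have hx := hleft (x + minPeriod m - j) (by lia) (by lia)
    rw [Nat.add_sub_cancel' (by lia), Nat.add_sub_cancel] at hx
    exact hx.symm
  · rcases lt_or_ge (x + minPeriod m) (j + m.length) with hlt' | hge'
    · exact hmid x ⟨by lia, by lia⟩ ⟨by lia, by lia⟩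
    · have hx := hright (x - j) (by lia) (by lia)
      rwa [Nat.add_sub_cancel' hge] at hx

theorem add_mem_occurrencesIn (hper : PeriodicOn u p (Ico j (j + m.length + p)))
    (hj : j ∈ occurrencesIn u m i n) (hjn : j + p + m.length ≤ i + n) :
    j + p ∈ occurrencesIn u m i n :=
  ⟨hj.1.trans (Nat.le_add_right j p), hjn, hper.wordSeg_add_eq.trans hj.2.2⟩

theorem sub_mem_occurrencesIn (hper : PeriodicOn u p (Ico (j - p) (j + m.length)))
    (hj : j ∈ occurrencesIn u m i n) (hij : i + p ≤ j) : j - p ∈ occurrencesIn u m i n := by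
  obtain ⟨k, rfl⟩ := Nat.exists_eq_add_of_le' (le_of_add_le_right hij)
  rw [Nat.add_sub_cancel, Nat.add_right_comm] at hper
  obtain ⟨-, hkn, hocc⟩ := hj
  rw [Nat.add_sub_cancel]
  exact ⟨by lia, by lia, hper.wordSeg_add_eq.symm.trans hocc⟩

section

variable (hper : ∀ j ∈ occurrencesIn u m i n, PeriodicOn u p (Ico (j - p) (j + m.length + p)))
include hper

theorem exists_mem_occurrencesIn_lt_add (hp : 0 < p) (hne : (occurrencesIn u m i n).Nonempty) :
    ∃ j ∈ occurrencesIn u m i n, j < i + p := by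
  obtain ⟨j, hj, hleast⟩ := (OrderBot.bddBelow _).exists_isLeast_of_nonempty hne
  refine ⟨j, hj, not_le.1 fun hij => ?_⟩
  have hper_left := (hper j hj).mono (Ico_subset_Ico_right (Nat.le_add_right _ p))
  have hle : j ≤ j - p := hleast (sub_mem_occurrencesIn hper_left hj hij)
  lia

theorem exists_mem_occurrencesIn_le_and_lt (hp : 0 < p) (hne : (occurrencesIn u m i n).Nonempty)
    (hix : i ≤ x) (hxn : x + p < i + n) :
    ∃ j ∈ occurrencesIn u m i n, j ≤ x + p ∧ x < j + m.length := by
  have hne' : (occurrencesIn u m i n ∩ Iic (x + p)).Nonempty := by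
    obtain ⟨j, hj, hji⟩ := exists_mem_occurrencesIn_lt_add hper hp hne
    exact ⟨j, hj, mem_Iic.2 (by lia)⟩
  obtain ⟨j, ⟨hj, hjx⟩, hgreatest⟩ :=
    (bddAbove_Iic.mono inter_subset_right).exists_isGreatest_of_nonempty hne'
  refine ⟨j, hj, hjx, not_le.1 fun hle => ?_⟩
  have hper_right := (hper j hj).mono (Ico_subset_Ico_left (Nat.sub_le j p))
  have hge : j + p ≤ j :=
    hgreatest ⟨add_mem_occurrencesIn hper_right hj (by lia), mem_Iic.2 (by lia)⟩
  lia

theorem periodicOn_of_forall_mem_occurrencesIn (hne : (occurrencesIn u m i n).Nonempty) :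
    PeriodicOn u p (Ico i (i + n)) := by
  rintro x ⟨hix, -⟩ ⟨-, hxn⟩
  rcases p.eq_zero_or_pos with rfl | hp
  · rfl
  obtain ⟨j, hj, hjx, hxj⟩ := exists_mem_occurrencesIn_le_and_lt hper hp hne hix hxn
  exact hper j hj x ⟨by lia, by lia⟩ ⟨by lia, by lia⟩

end

end PeriodicityOfWindow

/-- if `v = u[i..i+n)` is an occurrence of a factor `v` in `u`, `m` occurs in
`u[i..i+n)`, and every occurrence of `m` inside `u[i..i+n)` is internal, then `v` is
`p(m)`-periodic. -/
theorem stmt9 {α : Type*} (u : ℕ → α) (i n : ℕ) (v m : List α) (hm : m ≠ [])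
    (hv : v = wordSeg u i n)
    (hocc : ∃ j, i ≤ j ∧ j + m.length ≤ i + n ∧ wordSeg u j m.length = m)
    (hint : ∀ j, i ≤ j → j + m.length ≤ i + n → wordSeg u j m.length = m →
      InternalOcc u m j) :
    ∀ h, h + minPeriod m < n → u (i + h) = u (i + h + minPeriod m) := by
  intro h hh
  have hper : PeriodicOn u (minPeriod m) (Set.Ico i (i + n)) :=
    periodicOn_of_forall_mem_occurrencesIn
      (fun j ⟨hij, hjn, hj⟩ => (hint j hij hjn hj).periodicOn) hocc
  exact hper (i + h) ⟨by lia, by lia⟩ ⟨by lia, by lia⟩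
end

section
/- Let t be the Thue–Morse word, the fixed point beginning with 0 of the morphism φ : 0 ↦ 01, 1 ↦ 10 on the alphabet {0,1}. Then there exist languages S_1 and S_2 with at most 2 words of each length n ≥ 1 (one of each length suffices for n = 0) such that every factor of t belongs to S_1 · S_2; in particular t ∈ 𝓦_2. Concretely, one may take S_1 to be the set of all suffixes of the words φⁿ(0) and φⁿ(1), n ≥ 0, and S_2 the set of all their prefixes. -/
/-- The Thue–Morse morphism `φ : 0 ↦ 01, 1 ↦ 10` (with `false = 0`, `true = 1`). -/
def phiTM : Bool → List Bool
  | false => [false, true]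
  | true => [true, false]

/-- `φⁿ(c)` : the `n`-th iterate of the morphism `φ` applied to the letter `c`. -/
def phiIter : ℕ → Bool → List Bool
  | 0, c => [c]
  | n + 1, c => (phiIter n c).flatMap phiTM

variable {α β : Type*}

theorem exists_prefix_of_prefix_flatMap {f : α → List β} {s : List β} {l : List α} (hl : l ≠ [])
    (hf : ∀ a ∈ l, s.length ≤ (f a).length) (h : s <+: l.flatMap f) : ∃ a ∈ l, s <+: f a := by
  obtain ⟨a, l, rfl⟩ := List.exists_cons_of_ne_nil hl
  rw [List.flatMap_cons] at h
  exact ⟨a, List.mem_cons_self, List.prefix_of_prefix_length_le h (List.prefix_append _ _)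
    (hf a List.mem_cons_self)⟩

theorem exists_suffix_of_suffix_flatMap {f : α → List β} {s : List β} {l : List α} (hl : l ≠ [])
    (hf : ∀ a ∈ l, s.length ≤ (f a).length) (h : s <:+ l.flatMap f) : ∃ a ∈ l, s <:+ f a := by
  obtain ⟨l, a, rfl⟩ := List.eq_nil_or_concat' l |>.resolve_left hl
  rw [List.flatMap_append, List.flatMap_singleton] at h
  exact ⟨a, List.mem_concat_self, List.suffix_of_suffix_length_le h (List.suffix_append _ _)
    (hf a List.mem_concat_self)⟩

theorem langComplexity_le_card {ι : Type*} [Finite ι] {L : Set (List α)} {n : ℕ} (f : ι → List α)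
    (h : ∀ s ∈ L, s.length = n → s ∈ Set.range f) : langComplexity L n ≤ Nat.card ι :=
  calc langComplexity L n
    _ ≤ (Set.range f).ncard := Set.ncard_le_ncard (fun s hs => h s hs.1 hs.2) (Set.finite_range f)
    _ ≤ Nat.card ι := Finite.card_range_le f

/-- The iterate `σᵐ(c)` of the morphism of free monoids given by its values `σ` on letters; the
Thue–Morse words `phiIter` are the case `σ = phiTM`. -/
def morphismIter (σ : α → List α) : ℕ → α → List α
  | 0, c => [c]
  | m + 1, c => (morphismIter σ m c).flatMap σ

theorem morphismIter_add (σ : α → List α) (m n : ℕ) (c : α) :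
    morphismIter σ (m + n) c = (morphismIter σ m c).flatMap (morphismIter σ n) := by
  induction n with
  | zero => exact List.flatMap_singleton' _ |>.symm
  | succ n ih => rw [← add_assoc, morphismIter, ih, List.flatMap_assoc]; rfl

section UniformMorphism

variable {σ : α → List α} {k : ℕ}

theorem length_morphismIter (hσ : ∀ a, (σ a).length = k) (m : ℕ) (c : α) :
    (morphismIter σ m c).length = k ^ m := by
  induction m with
  | zero => rfl
  | succ m ih => simp [morphismIter, List.length_flatMap, hσ, ih, pow_succ]

theorem exists_morphismIter_eq_flatMap (hσ : ∀ a, (σ a).length = k) (hk : 0 < k) {m n : ℕ}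
    (hnm : n ≤ m) (c : α) : ∃ l ≠ [], morphismIter σ m c = l.flatMap (morphismIter σ n) := by
  refine ⟨morphismIter σ (m - n) c, ?_, by rw [← morphismIter_add, Nat.sub_add_cancel hnm]⟩
  rw [← List.length_pos_iff, length_morphismIter hσ]
  exact pow_pos hk _

theorem le_length_morphismIter_clog (hσ : ∀ a, (σ a).length = k) (hk : 1 < k) (n : ℕ) (c : α) :
    n ≤ (morphismIter σ (Nat.clog k n) c).length :=
  (Nat.le_pow_clog hk n).trans_eq (length_morphismIter hσ _ c).symm

theorem clog_le_of_le_length_morphismIter (hσ : ∀ a, (σ a).length = k) {m n : ℕ} {c : α}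
    (h : n ≤ (morphismIter σ m c).length) : Nat.clog k n ≤ m :=
  Nat.clog_le_of_le_pow (h.trans_eq (length_morphismIter hσ m c))

theorem exists_prefix_morphismIter_clog (hσ : ∀ a, (σ a).length = k) (hk : 1 < k) {s : List α}
    {m : ℕ} {c : α} (hs : s <+: morphismIter σ m c) :
    ∃ d, s <+: morphismIter σ (Nat.clog k s.length) d := by
  obtain ⟨l, hl, hlm⟩ := exists_morphismIter_eq_flatMap hσ (Nat.zero_lt_of_lt hk)
    (clog_le_of_le_length_morphismIter hσ hs.length_le) c
  obtain ⟨d, -, hd⟩ := exists_prefix_of_prefix_flatMap hl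
    (fun d _ => le_length_morphismIter_clog hσ hk s.length d) (hlm ▸ hs)
  exact ⟨d, hd⟩

theorem exists_suffix_morphismIter_clog (hσ : ∀ a, (σ a).length = k) (hk : 1 < k) {s : List α}
    {m : ℕ} {c : α} (hs : s <:+ morphismIter σ m c) :
    ∃ d, s <:+ morphismIter σ (Nat.clog k s.length) d := by
  obtain ⟨l, hl, hlm⟩ := exists_morphismIter_eq_flatMap hσ (Nat.zero_lt_of_lt hk)
    (clog_le_of_le_length_morphismIter hσ hs.length_le) c
  obtain ⟨d, -, hd⟩ := exists_suffix_of_suffix_flatMap hl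
    (fun d _ => le_length_morphismIter_clog hσ hk s.length d) (hlm ▸ hs)
  exact ⟨d, hd⟩

theorem langComplexity_prefixes_morphismIter_le [Finite α] (hσ : ∀ a, (σ a).length = k)
    (hk : 1 < k) (n : ℕ) :
    langComplexity {s | ∃ m c, s <+: morphismIter σ m c} n ≤ Nat.card α := by
  refine langComplexity_le_card (fun d => (morphismIter σ (Nat.clog k n) d).take n) ?_
  rintro s ⟨m, c, hs⟩ rfl
  obtain ⟨d, hd⟩ := exists_prefix_morphismIter_clog hσ hk hs
  exact ⟨d, (List.prefix_iff_eq_take.1 hd).symm⟩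

theorem langComplexity_suffixes_morphismIter_le [Finite α] (hσ : ∀ a, (σ a).length = k)
    (hk : 1 < k) (n : ℕ) :
    langComplexity {s | ∃ m c, s <:+ morphismIter σ m c} n ≤ Nat.card α := by
  refine langComplexity_le_card (fun d => (morphismIter σ (Nat.clog k n) d).rtake n) ?_
  rintro s ⟨m, c, hs⟩ rfl
  obtain ⟨d, hd⟩ := exists_suffix_morphismIter_clog hσ hk hs
  exact ⟨d, (List.suffix_iff_eq_drop.1 hd).symm⟩

end UniformMorphism

theorem wordSeg_add (u : ℕ → α) (i m n : ℕ) :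
    wordSeg u i (m + n) = wordSeg u i m ++ wordSeg u (i + m) n := by
  simp [wordSeg, List.range_add, Function.comp_def, add_assoc]

theorem wordSeg_one (u : ℕ → α) (i : ℕ) : wordSeg u i 1 = [u i] := rfl

theorem wordSeg_prefix_wordSeg (u : ℕ → α) (i : ℕ) {m n : ℕ} (h : m ≤ n) :
    wordSeg u i m <+: wordSeg u i n := by
  rw [← Nat.add_sub_cancel' h, wordSeg_add]
  exact List.prefix_append _ _

theorem wordSeg_suffix_wordSeg (u : ℕ → α) {i j m n : ℕ} (hij : i ≤ j) (h : j + m = i + n) :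
    wordSeg u j m <:+ wordSeg u i n := by
  obtain ⟨d, rfl⟩ := Nat.exists_eq_add_of_le hij
  obtain rfl : d + m = n := by omega
  rw [wordSeg_add]
  exact List.suffix_append _ _

section FixedPoint

variable {σ : α → List α} {k : ℕ} {u : ℕ → α}

theorem flatMap_wordSeg (hu : ∀ n, σ (u n) = wordSeg u (k * n) k) (i n : ℕ) :
    (wordSeg u i n).flatMap σ = wordSeg u (k * i) (k * n) := by
  induction n with
  | zero => rfl
  | succ n ih =>
    rw [wordSeg_add, wordSeg_one, List.flatMap_append, List.flatMap_singleton, ih, hu, mul_add,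
      ← wordSeg_add, Nat.mul_succ]

theorem morphismIter_eq_wordSeg (hu : ∀ n, σ (u n) = wordSeg u (k * n) k) (m b : ℕ) :
    morphismIter σ m (u b) = wordSeg u (b * k ^ m) (k ^ m) := by
  induction m with
  | zero => rw [pow_zero, mul_one, wordSeg_one, morphismIter]
  | succ m ih => rw [morphismIter, ih, flatMap_wordSeg hu, pow_succ', mul_left_comm]

end FixedPoint

theorem exists_isolated_dyadic {i j : ℕ} (hi : 0 < i) (hij : i ≤ j) :
    ∃ m b, b * 2 ^ m < i ∧ i ≤ (b + 1) * 2 ^ m ∧ (b + 1) * 2 ^ m ≤ j ∧ j < (b + 2) * 2 ^ m := by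
  induction j using Nat.strong_induction_on generalizing i with
  | _ j ih =>
    obtain rfl | hlt := hij.eq_or_lt
    · exact ⟨0, i - 1, by omega⟩
    · obtain ⟨m, b, hmb⟩ := ih (j / 2) (by omega) (i := (i + 1) / 2) (by omega) (by omega)
      refine ⟨m + 1, b, ?_⟩
      simp only [pow_succ, ← mul_assoc]
      omega

theorem exists_wordSeg_eq_append_dyadic (u : ℕ → α) (i n : ℕ) :
    ∃ m b c s p, s <:+ wordSeg u (b * 2 ^ m) (2 ^ m) ∧ p <+: wordSeg u (c * 2 ^ m) (2 ^ m) ∧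
      wordSeg u i n = s ++ p := by
  obtain rfl | hi := Nat.eq_zero_or_pos i
  · refine ⟨n, 0, 0, [], wordSeg u 0 n, List.nil_suffix, ?_, rfl⟩
    rw [zero_mul]
    exact wordSeg_prefix_wordSeg u 0 Nat.lt_two_pow_self.le
  · obtain ⟨m, b, hbi, hib, hbn, hnb⟩ := exists_isolated_dyadic hi (Nat.le_add_right i n)
    obtain ⟨q, hq⟩ := Nat.exists_eq_add_of_le hib
    obtain ⟨r, rfl⟩ : ∃ r, n = q + r := Nat.exists_eq_add_of_le (by omega)
    refine ⟨m, b, b + 1, wordSeg u i q, wordSeg u (i + q) r,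
      wordSeg_suffix_wordSeg u hbi.le (by rw [← hq]; ring), ?_, wordSeg_add u i q r⟩
    rw [hq]
    exact wordSeg_prefix_wordSeg u _ (by linarith)

theorem stmt11_general [Finite α] {σ : α → List α} (hσ : ∀ a, (σ a).length = 2) {u : ℕ → α}
    (hu : ∀ n, σ (u n) = wordSeg u (2 * n) 2) :
    (∀ n, langComplexity {s | ∃ m c, s <:+ morphismIter σ m c} n ≤ Nat.card α) ∧
    (∀ n, langComplexity {s | ∃ m c, s <+: morphismIter σ m c} n ≤ Nat.card α) ∧
    (∀ w ∈ Factors u,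
      ∃ s₁ ∈ {s | ∃ m c, s <:+ morphismIter σ m c},
        ∃ s₂ ∈ {s | ∃ m c, s <+: morphismIter σ m c},
          w = s₁ ++ s₂) := by
  refine ⟨langComplexity_suffixes_morphismIter_le hσ one_lt_two,
    langComplexity_prefixes_morphismIter_le hσ one_lt_two, ?_⟩
  rintro w ⟨i, hw⟩
  obtain ⟨m, b, c, s, p, hs, hp, hsp⟩ := exists_wordSeg_eq_append_dyadic u i w.length
  rw [← morphismIter_eq_wordSeg hu] at hs hp
  exact ⟨s, ⟨m, u b, hs⟩, p, ⟨m, u c, hp⟩, hw.trans hsp⟩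

theorem morphismIter_phiTM (m : ℕ) (c : Bool) : morphismIter phiTM m c = phiIter m c := by
  induction m with
  | zero => rfl
  | succ m ih => rw [morphismIter, ih, phiIter]

theorem length_phiTM (c : Bool) : (phiTM c).length = 2 := by
  cases c <;> rfl

theorem phiTM_eq_wordSeg {t : ℕ → Bool} (he : ∀ n, t (2 * n) = t n)
    (ho : ∀ n, t (2 * n + 1) = !t n) (n : ℕ) : phiTM (t n) = wordSeg t (2 * n) 2 := by
  rw [wordSeg_add t (2 * n) 1 1, wordSeg_one, wordSeg_one, he, ho]
  cases t n <;> rfl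

/-- the Thue–Morse word `t` (the fixed point starting with `0` of `φ`,
i.e. `t 0 = 0`, `t (2n) = t n`, `t (2n+1) = ¬ t n`) belongs to `𝓦₂`: with `S₁` the set of
all suffixes of the words `φⁿ(0)`, `φⁿ(1)` and `S₂` the set of all their prefixes, each of
`S₁`, `S₂` has at most 2 words of each length, and every factor of `t` lies in `S₁·S₂`. -/
theorem stmt11 (t : ℕ → Bool) (h0 : t 0 = false)
    (he : ∀ n, t (2 * n) = t n) (ho : ∀ n, t (2 * n + 1) = ! t n) :
    (∀ n, langComplexity {s : List Bool | ∃ m c, s <:+ phiIter m c} n ≤ 2) ∧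
    (∀ n, langComplexity {s : List Bool | ∃ m c, s <+: phiIter m c} n ≤ 2) ∧
    (∀ w ∈ Factors t,
      ∃ s₁ ∈ {s : List Bool | ∃ m c, s <:+ phiIter m c},
        ∃ s₂ ∈ {s : List Bool | ∃ m c, s <+: phiIter m c},
          w = s₁ ++ s₂) := by
  simpa only [morphismIter_phiTM, Nat.card_eq_fintype_card, Fintype.card_bool] using
    stmt11_general length_phiTM (phiTM_eq_wordSeg he ho)
end
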